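/- arXiv:2203.15589 — 8 statements merged into one kernel-verified Lean document; each statement's English description precedes it below -/
import Mathlib

section
/- Let X be a measurable space, T a positive integer, V > 0, ρ ≥ 0, G ≥ 0. Let f, g : X → ℝ and let π* be a probability measure on X with respect to which f and g are integrable and E_{π*}[g] ≤ 0. For each t = 1, …, T let f̄_t, ḡ_t : X → ℝ and x_t ∈ X with |ḡ_t(x_t)| ≤ G. Let φ_1 = 0 and φ_{t+1} = Proj_{[0,ρ]}(φ_t + ḡ_t(x_t)/V). Then for every φ ∈ [0, ρ], T·E_{π*}[f] − ∑_{t=1}^T f(x_t) + φ·∑_{t=1}^T g(x_t) ≤ T₁ + T₂ + (V/2)·φ² + T·G²/(2V), where T₁ := ∑_{t=1}^T ( E_{π*}[f] − φ_t·E_{π*}[g] − ( f̄_t(x_t) − φ_t·ḡ_t(x_t) ) ) and T₂ := ∑_{t=1}^T ( f̄_t(x_t) − f(x_t) ) + φ·∑_{t=1}^T ( g(x_t) − ḡ_t(x_t) ). -/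
open Finset MeasureTheory

/-!
The dual variable performs projected online gradient ascent on the linear payoffs
`φ ↦ φ * c t`, where `c t = gbar t (x t)`, with step size `1 / V`. Projection onto `[0, ρ]` does not
increase the distance to a comparator `φ₀ ∈ [0, ρ]`, so expanding the square
`(φ t + c t / V - φ₀) ^ 2` bounds the one-step regret `(φ₀ - φ t) * c t` by the decrease of the
potential `V / 2 * (φ t - φ₀) ^ 2` plus `G ^ 2 / (2 * V)`. Telescoping from `φ 1 = 0` gives the terms
`V / 2 * φ₀ ^ 2 + T * G ^ 2 / (2 * V)`. The rest is an algebraic rearrangement of sums, in which the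
extra term `∑ φ t * E[g]` is nonpositive because `φ t ≥ 0` and `E[g] ≤ 0`.
-/

/-- Projection onto `[0, ρ]` does not increase the distance to a point of `[0, ρ]`. -/
lemma sq_proj_sub_le {ρ a : ℝ} (ha : a ∈ Set.Icc (0 : ℝ) ρ) (y : ℝ) :
    (min ρ (max 0 y) - a) ^ 2 ≤ (y - a) ^ 2 := by
  obtain ⟨h0, h1⟩ := ha
  rcases le_total y 0 with hy | hy
  · rw [max_eq_left hy, min_eq_right (h0.trans h1)]
    nlinarith
  · rw [max_eq_right hy]
    rcases le_total ρ y with h | h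
    · rw [min_eq_left h]
      nlinarith
    · rw [min_eq_right h]

/-- One-step regret of projected gradient ascent, bounded by the decrease of the potential. -/
lemma dual_step {V ρ G a p c : ℝ} (hV : 0 < V) (ha : a ∈ Set.Icc (0 : ℝ) ρ) (hc : |c| ≤ G) :
    (a - p) * c + V / 2 * (min ρ (max 0 (p + c / V)) - a) ^ 2
      ≤ V / 2 * (p - a) ^ 2 + G ^ 2 / (2 * V) := by
  have h1 := mul_le_mul_of_nonneg_left (sq_proj_sub_le ha (p + c / V)) (half_pos hV).le
  have h2 : V / 2 * (p + c / V - a) ^ 2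
      = V / 2 * (p - a) ^ 2 + (p - a) * c + c ^ 2 / (2 * V) := by
    field_simp
    ring
  have h3 : c ^ 2 / (2 * V) ≤ G ^ 2 / (2 * V) := by
    have := sq_le_sq' (abs_le.mp hc).1 (abs_le.mp hc).2
    gcongr
  linarith

/-- Regret bound for the dual update against a fixed comparator `a ∈ [0, ρ]`. The potential at time
`n + 1` is kept on the left so that the induction on `n` telescopes. -/
lemma dual_regret {V ρ G a : ℝ} (hV : 0 < V) (ha : a ∈ Set.Icc (0 : ℝ) ρ) (c φ : ℕ → ℝ)
    (hφ1 : φ 1 = 0) (n : ℕ) (hc : ∀ t ∈ Finset.Icc 1 n, |c t| ≤ G)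
    (hrec : ∀ t ∈ Finset.Icc 1 n, φ (t + 1) = min ρ (max 0 (φ t + c t / V))) :
    ∑ t ∈ Finset.Icc 1 n, (a - φ t) * c t + V / 2 * (φ (n + 1) - a) ^ 2
      ≤ V / 2 * a ^ 2 + (n : ℝ) * G ^ 2 / (2 * V) := by
  induction n with
  | zero => simp [hφ1]
  | succ k ih =>
    have hsub : Finset.Icc 1 k ⊆ Finset.Icc 1 (k + 1) :=
      Finset.Icc_subset_Icc_right (Nat.le_succ k)
    have hmem : k + 1 ∈ Finset.Icc 1 (k + 1) := by simp
    have h1 := ih (fun t ht => hc t (hsub ht)) (fun t ht => hrec t (hsub ht))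
    have h2 := dual_step (p := φ (k + 1)) hV ha (hc _ hmem)
    rw [← hrec _ hmem] at h2
    have h3 : ((k + 1 : ℕ) : ℝ) * G ^ 2 / (2 * V)
        = (k : ℝ) * G ^ 2 / (2 * V) + G ^ 2 / (2 * V) := by
      push_cast
      ring
    rw [Finset.sum_Icc_succ_top (by omega), h3]
    linarith

/-- Key regret–violation decomposition (equation (eq:rt_plus)) in the proof of Theorem 1. -/
theorem regret_violation_decomposition {X : Type*} [MeasurableSpace X]
    (T : ℕ) (hT : 0 < T) (V ρ G : ℝ) (hV : 0 < V) (hρ : 0 ≤ ρ) (hG : 0 ≤ G)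
    (f g : X → ℝ) (π : Measure X) [IsProbabilityMeasure π]
    (hf : Integrable f π) (hg : Integrable g π) (hgneg : ∫ y, g y ∂π ≤ 0)
    (fbar gbar : ℕ → X → ℝ) (x : ℕ → X)
    (hGb : ∀ t ∈ Finset.Icc 1 T, |gbar t (x t)| ≤ G)
    (φ : ℕ → ℝ) (hφ1 : φ 1 = 0)
    (hrec : ∀ t ∈ Finset.Icc 1 T, φ (t + 1) = min ρ (max 0 (φ t + gbar t (x t) / V)))
    (φ₀ : ℝ) (hφ₀ : φ₀ ∈ Set.Icc (0 : ℝ) ρ) :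
    (T : ℝ) * (∫ y, f y ∂π) - ∑ t ∈ Finset.Icc 1 T, f (x t)
      + φ₀ * ∑ t ∈ Finset.Icc 1 T, g (x t)
    ≤ (∑ t ∈ Finset.Icc 1 T,
          ((∫ y, f y ∂π) - φ t * (∫ y, g y ∂π) - (fbar t (x t) - φ t * gbar t (x t))))
      + ((∑ t ∈ Finset.Icc 1 T, (fbar t (x t) - f (x t)))
          + φ₀ * ∑ t ∈ Finset.Icc 1 T, (g (x t) - gbar t (x t)))
      + V / 2 * φ₀ ^ 2 + (T : ℝ) * G ^ 2 / (2 * V) := by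
  have hreg := dual_regret hV hφ₀ (fun t => gbar t (x t)) φ hφ1 T hGb hrec
  have hnn : ∀ t ∈ Finset.Icc 1 T, 0 ≤ φ t := by
    intro t ht
    obtain ⟨h1, h2⟩ := Finset.mem_Icc.mp ht
    obtain ⟨s, rfl⟩ : ∃ s, t = s + 1 := ⟨t - 1, by omega⟩
    rcases Nat.eq_zero_or_pos s with rfl | hs
    · simp [hφ1]
    · rw [hrec s (Finset.mem_Icc.mpr ⟨hs, by omega⟩)]
      exact le_min hρ (le_max_left _ _)
  have hslack : (∑ t ∈ Finset.Icc 1 T, φ t) * ∫ y, g y ∂π ≤ 0 :=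
    mul_nonpos_of_nonneg_of_nonpos (Finset.sum_nonneg hnn) hgneg
  have hpot : 0 ≤ V / 2 * (φ (T + 1) - φ₀) ^ 2 := by positivity
  simp only [sub_mul, Finset.sum_sub_distrib, ← Finset.mul_sum, ← Finset.sum_mul,
    Finset.sum_const, Nat.card_Icc, Nat.add_sub_cancel, nsmul_eq_mul] at hreg ⊢
  linarith
end

section
/- Let X be a measurable space, T a positive integer, V > 0, ρ ≥ 0, G ≥ 0. Let f, g : X → ℝ and let π* be a probability measure on X with respect to which f and g are integrable and E_{π*}[g] ≤ 0. For each t = 1, …, T let f̄_t, ḡ_t : X → ℝ be integrable with respect to π* and satisfy f̄_t(x) ≥ f(x) and ḡ_t(x) ≤ g(x) for all x ∈ X; let x_t ∈ X with |ḡ_t(x_t)| ≤ G; let φ_1 = 0 and φ_{t+1} = Proj_{[0,ρ]}(φ_t + ḡ_t(x_t)/V); and suppose f̄_t(x_t) − φ_t·ḡ_t(x_t) ≥ f̄_t(x) − φ_t·ḡ_t(x) for all x ∈ X. Then for every φ ∈ [0, ρ], T·E_{π*}[f] − ∑_{t=1}^T f(x_t) + φ·∑_{t=1}^T g(x_t)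 ≤ ∑_{t=1}^T ( f̄_t(x_t) − f(x_t) ) + φ·∑_{t=1}^T ( g(x_t) − ḡ_t(x_t) ) + (V/2)·φ² + T·G²/(2V). -/
/-!
Optimism, `0 ≤ φ t` and greediness of `x t` bound `f - φ t * g ≤ fbar t - φ t * gbar t` pointwise
by the constant `fbar t (x t) - φ t * gbar t (x t)`. Integrating against `π` and using feasibility
`∫ g ≤ 0` shows that this constant is at least `∫ f` (`integral_le_of_lagrangian_le`). Replacing `φ t` by
the comparator `φ₀` costs `(φ₀ - φ t) * gbar t (x t)`, which is the regret of projected online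
gradient ascent with step size `1 / V`: as projection onto `[0, ρ]` does not increase the distance
to `φ₀`, this cost is at most a telescoping difference of `V / 2 * (φ t - φ₀) ^ 2` plus
`G ^ 2 / (2 * V)` (`dual_step_regret`). Summing over `t` from `φ 1 = 0` leaves `V / 2 * φ₀ ^ 2`.
-/

open Finset MeasureTheory

/-- One-step regret of projected gradient ascent with step size `1 / V` on the linear reward
`c`, against the comparator `a`. -/
lemma dual_step_regret {V ρ G a p c : ℝ} (hV : 0 < V) (ha : a ∈ Set.Icc (0 : ℝ) ρ)
    (hc : |c| ≤ G) :
    (a - p) * c ≤ V / 2 * ((p - a) ^ 2 - (min ρ (max 0 (p + c / V)) - a) ^ 2)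
      + G ^ 2 / (2 * V) := by
  have hproj := mul_le_mul_of_nonneg_left (sq_proj_sub_le ha (p + c / V)) (half_pos hV).le
  have hexpand : V / 2 * (p + c / V - a) ^ 2
      = V / 2 * (p - a) ^ 2 + (p - a) * c + c ^ 2 / (2 * V) := by
    field_simp
    ring
  have hcG : c ^ 2 / (2 * V) ≤ G ^ 2 / (2 * V) := by
    have hsq : c ^ 2 ≤ G ^ 2 := sq_le_sq' (abs_le.mp hc).1 (abs_le.mp hc).2
    gcongr
  linarith

/-- If `M` bounds an optimistic Lagrangian `F - p * H` with multiplier `p ≥ 0` from above, then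
it bounds the value of every feasible distribution. -/
lemma integral_le_of_lagrangian_le {X : Type*} [MeasurableSpace X] {π : Measure X}
    [IsProbabilityMeasure π] {f g F H : X → ℝ} (hf : Integrable f π) (hg : Integrable g π)
    (hgneg : ∫ y, g y ∂π ≤ 0) (hF : ∀ y, f y ≤ F y) (hH : ∀ y, H y ≤ g y) {p M : ℝ}
    (hp : 0 ≤ p) (hM : ∀ y, F y - p * H y ≤ M) :
    ∫ y, f y ∂π ≤ M := by
  have hle : ∫ y, (f y - p * g y) ∂π ≤ ∫ _, M ∂π :=
    integral_mono (hf.sub (hg.const_mul p)) (integrable_const M) fun y => by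
      have := mul_le_mul_of_nonneg_left (hH y) hp
      linarith [hF y, hM y]
  rw [integral_sub hf (hg.const_mul p), integral_const_mul] at hle
  simp only [integral_const, probReal_univ, one_smul] at hle
  have := mul_nonpos_of_nonneg_of_nonpos hp hgneg
  linarith

/-- Deterministic core of Theorem 1: the full decomposition combined with T₁ ≤ 0 under optimism. -/
theorem ckb_decomposition_optimistic {X : Type*} [MeasurableSpace X]
    (T : ℕ) (hT : 0 < T) (V ρ G : ℝ) (hV : 0 < V) (hρ : 0 ≤ ρ) (hG : 0 ≤ G)
    (f g : X → ℝ) (π : Measure X) [IsProbabilityMeasure π]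
    (hf : Integrable f π) (hg : Integrable g π) (hgneg : ∫ y, g y ∂π ≤ 0)
    (fbar gbar : ℕ → X → ℝ)
    (hfbar_int : ∀ t ∈ Finset.Icc 1 T, Integrable (fbar t) π)
    (hgbar_int : ∀ t ∈ Finset.Icc 1 T, Integrable (gbar t) π)
    (hopt_f : ∀ t ∈ Finset.Icc 1 T, ∀ x, f x ≤ fbar t x)
    (hopt_g : ∀ t ∈ Finset.Icc 1 T, ∀ x, gbar t x ≤ g x)
    (x : ℕ → X)
    (hGb : ∀ t ∈ Finset.Icc 1 T, |gbar t (x t)| ≤ G)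
    (φ : ℕ → ℝ) (hφ1 : φ 1 = 0)
    (hrec : ∀ t ∈ Finset.Icc 1 T, φ (t + 1) = min ρ (max 0 (φ t + gbar t (x t) / V)))
    (hgreedy : ∀ t ∈ Finset.Icc 1 T, ∀ y,
      fbar t y - φ t * gbar t y ≤ fbar t (x t) - φ t * gbar t (x t))
    (φ₀ : ℝ) (hφ₀ : φ₀ ∈ Set.Icc (0 : ℝ) ρ) :
    (T : ℝ) * (∫ y, f y ∂π) - ∑ t ∈ Finset.Icc 1 T, f (x t)
      + φ₀ * ∑ t ∈ Finset.Icc 1 T, g (x t)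
    ≤ (∑ t ∈ Finset.Icc 1 T, (fbar t (x t) - f (x t)))
      + φ₀ * (∑ t ∈ Finset.Icc 1 T, (g (x t) - gbar t (x t)))
      + V / 2 * φ₀ ^ 2 + (T : ℝ) * G ^ 2 / (2 * V) := by
  have hφnn : ∀ t ∈ Finset.Icc 1 T, 0 ≤ φ t := by
    intro t ht
    obtain ⟨h1, h2⟩ := Finset.mem_Icc.mp ht
    rcases h1.eq_or_lt with rfl | h1
    · exact hφ1.ge
    · obtain ⟨s, rfl⟩ : ∃ s, t = s + 1 := ⟨t - 1, by omega⟩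
      rw [hrec s (Finset.mem_Icc.mpr (by omega))]
      exact le_min hρ (le_max_left _ _)
  have hstep : ∀ t ∈ Finset.Icc 1 T,
      (∫ y, f y ∂π) - f (x t) + φ₀ * g (x t)
        ≤ (fbar t (x t) - f (x t)) + φ₀ * (g (x t) - gbar t (x t))
          + V / 2 * ((φ t - φ₀) ^ 2 - (φ (t + 1) - φ₀) ^ 2) + G ^ 2 / (2 * V) := by
    intro t ht
    have hprimal := integral_le_of_lagrangian_le hf hg hgneg (hopt_f t ht) (hopt_g t ht)
      (hφnn t ht) (hgreedy t ht)
    have hdual := dual_step_regret (p := φ t) hV hφ₀ (hGb t ht)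
    rw [← hrec t ht] at hdual
    linarith
  have htel : ∑ t ∈ Finset.Icc 1 T, ((φ t - φ₀) ^ 2 - (φ (t + 1) - φ₀) ^ 2)
      = φ₀ ^ 2 - (φ (T + 1) - φ₀) ^ 2 := by
    have h := Finset.sum_Ico_sub (fun t => -(φ t - φ₀) ^ 2) (show 1 ≤ T + 1 by omega)
    rw [← Finset.Ico_add_one_right_eq_Icc]
    simp only [hφ1] at h
    calc _ = ∑ t ∈ Finset.Ico 1 (T + 1), (-(φ (t + 1) - φ₀) ^ 2 - -(φ t - φ₀) ^ 2) :=
          Finset.sum_congr rfl fun t _ => by ring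
      _ = _ := by rw [h]; ring
  have hsum := Finset.sum_le_sum hstep
  simp only [Finset.sum_add_distrib, ← Finset.mul_sum, htel] at hsum
  rw [Finset.sum_sub_distrib (fun _ => ∫ y, f y ∂π)] at hsum
  simp only [Finset.sum_const, Nat.card_Icc, Nat.add_sub_cancel, nsmul_eq_mul] at hsum
  have hlast : 0 ≤ V / 2 * (φ (T + 1) - φ₀) ^ 2 := by positivity
  rw [mul_div_assoc]
  linarith
end

section
/- Let X be a measurable space, f, g : X → ℝ, let π* be a probability measure on X with f integrable, let x_1, …, x_T ∈ X, and let ρ > 0 and A ∈ ℝ. Suppose there exists κ* ≥ 0 with 2κ* ≤ ρ such that f(x) − κ*·g(x) ≤ E_{π*}[f] for every x ∈ X, and suppose that for every φ ∈ [0, ρ], T·E_{π*}[f] − ∑_{t=1}^T f(x_t) + φ·∑_{t=1}^T g(x_t) ≤ A. Then [∑_{t=1}^T g(x_t)]_+ ≤ 2A/ρ. -/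
open Finset MeasureTheory

/-! Write `S = ∑ g (x t)` and `D = T * E[f] - ∑ f (x t)`. Summing the pointwise duality
inequality over the points `x t` gives `D ≥ -κ * S`. If `S ≥ 0`, the choice `φ = ρ` gives
`(ρ - κ) * S ≤ A`, and `ρ - κ ≥ ρ / 2`. If `S < 0`, the choice `φ = 0` gives
`0 ≤ -κ * S ≤ D ≤ A`, and the positive part of `S` vanishes. -/

/-- Constraint-violation step in the proof of Theorem 1: combining the regret–violation
decomposition with the convex-optimization lemma applied to the empirical distribution. -/
theorem violation_from_decomposition {X : Type*} [MeasurableSpace X]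
    (f g : X → ℝ) (π : Measure X) [IsProbabilityMeasure π] (hf : Integrable f π)
    (T : ℕ) (x : ℕ → X) (ρ A : ℝ) (hρ : 0 < ρ)
    (hdual : ∃ κ : ℝ, 0 ≤ κ ∧ 2 * κ ≤ ρ ∧ ∀ y : X, f y - κ * g y ≤ ∫ z, f z ∂π)
    (hA : ∀ φ ∈ Set.Icc (0 : ℝ) ρ,
      (T : ℝ) * (∫ z, f z ∂π) - ∑ t ∈ Finset.Icc 1 T, f (x t)
        + φ * ∑ t ∈ Finset.Icc 1 T, g (x t) ≤ A) :
    max (∑ t ∈ Finset.Icc 1 T, g (x t)) 0 ≤ 2 * A / ρ := by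
  obtain ⟨κ, hκ, hκρ, h⟩ := hdual
  have hsum := Finset.sum_le_sum (s := Finset.Icc 1 T) fun t _ => h (x t)
  simp only [Finset.sum_sub_distrib, ← Finset.mul_sum, Finset.sum_const, Nat.card_Icc,
    Nat.add_sub_cancel, nsmul_eq_mul] at hsum
  have h0 := hA 0 ⟨le_rfl, hρ.le⟩
  have h1 := hA ρ ⟨hρ.le, le_rfl⟩
  rw [le_div_iff₀ hρ]
  generalize ∑ t ∈ Finset.Icc 1 T, g (x t) = S at *
  rcases le_total 0 S with hS | hS
  · rw [max_eq_left hS]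
    nlinarith [mul_nonneg (sub_nonneg.2 hκρ) hS]
  · rw [max_eq_right hS]
    nlinarith [mul_nonneg hκ (neg_nonneg.2 hS)]
end

section
/- Let X be a measurable space, f, g : X → ℝ with |f(x)| ≤ B for all x ∈ X, δ > 0, and 0 ≤ ε ≤ δ. Let π* and π_0 be probability measures on X with f and g integrable with respect to both, E_{π*}[g] ≤ 0, and E_{π_0}[g] ≤ −δ. Let π'_ε be a probability measure on X with f integrable such that E_{π'_ε}[f] ≥ E_π[f] for every probability measure π on X with f and g integrable and E_π[g] + ε ≤ 0. Then for every positive integer T, T·E_{π*}[f] − T·E_{π'_ε}[f] ≤ 2BTε/δ. -/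
open MeasureTheory

/-! The mixture `(1 - ε/δ) πstar + (ε/δ) π₀` satisfies the `ε`-tightened constraint, because
`(1 - ε/δ) * 0 + (ε/δ) * (-δ) = -ε`. Hence its reward is at most that of the tightened optimum
`πε`, while it differs from the reward of `πstar` by `(ε/δ) (E_πstar[f] - E_π₀[f])`, which is
at most `2 B ε/δ` since `|f| ≤ B`. -/

/-- Claim 1: the regret cost of introducing slackness ε in the dual update. -/
theorem slackness_regret_cost {X : Type*} [MeasurableSpace X] (f g : X → ℝ) (B : ℝ)
    (hfB : ∀ x, |f x| ≤ B) (δ ε : ℝ) (hδ : 0 < δ) (hε : 0 ≤ ε) (hεδ : ε ≤ δ)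
    (πstar π₀ : Measure X) [IsProbabilityMeasure πstar] [IsProbabilityMeasure π₀]
    (hfs : Integrable f πstar) (hgs : Integrable g πstar)
    (hf0 : Integrable f π₀) (hg0 : Integrable g π₀)
    (hfeas : ∫ x, g x ∂πstar ≤ 0) (hslater : ∫ x, g x ∂π₀ ≤ -δ)
    (πε : Measure X) [IsProbabilityMeasure πε] (hfe : Integrable f πε)
    (hopt : ∀ π : Measure X, IsProbabilityMeasure π → Integrable f π → Integrable g π →
      (∫ x, g x ∂π) + ε ≤ 0 → ∫ x, f x ∂π ≤ ∫ x, f x ∂πε)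
    (T : ℕ) (hT : 0 < T) :
    (T : ℝ) * (∫ x, f x ∂πstar) - (T : ℝ) * (∫ x, f x ∂πε) ≤ 2 * B * T * ε / δ := by
  set t : ℝ := ε / δ with ht
  have ht0 : 0 ≤ t := by positivity
  have ht1 : 0 ≤ 1 - t := sub_nonneg.2 ((div_le_one hδ).2 hεδ)
  have htδ : t * δ = ε := div_mul_cancel₀ ε hδ.ne'
  set mix : Measure X := ENNReal.ofReal (1 - t) • πstar + ENNReal.ofReal t • π₀ with hmix
  have hprob : IsProbabilityMeasure mix := ⟨by
    simp [hmix, ← ENNReal.ofReal_add ht1 ht0]⟩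
  have hint : ∀ h : X → ℝ, Integrable h πstar → Integrable h π₀ →
      Integrable h mix ∧ ∫ x, h x ∂mix = (1 - t) * ∫ x, h x ∂πstar + t * ∫ x, h x ∂π₀ := by
    intro h hs h0
    have h1 := hs.smul_measure (c := ENNReal.ofReal (1 - t)) ENNReal.ofReal_ne_top
    have h2 := h0.smul_measure (c := ENNReal.ofReal t) ENNReal.ofReal_ne_top
    refine ⟨h1.add_measure h2, ?_⟩
    rw [hmix, integral_add_measure h1 h2, integral_smul_measure, integral_smul_measure,
      ENNReal.toReal_ofReal ht1, ENNReal.toReal_ofReal ht0, smul_eq_mul, smul_eq_mul]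
  obtain ⟨hfm, hfm'⟩ := hint f hfs hf0
  obtain ⟨hgm, hgm'⟩ := hint g hgs hg0
  have hle := hopt mix hprob hfm hgm (by
    rw [hgm']
    have h1 := mul_nonpos_of_nonneg_of_nonpos ht1 hfeas
    have h2 := mul_le_mul_of_nonneg_left hslater ht0
    linarith)
  rw [hfm'] at hle
  have hub : ∫ x, f x ∂πstar ≤ B := by
    simpa using integral_mono hfs (integrable_const B) fun x => (abs_le.1 (hfB x)).2
  have hlb : -B ≤ ∫ x, f x ∂π₀ := by
    simpa using integral_mono (integrable_const (-B)) hf0 fun x => (abs_le.1 (hfB x)).1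
  have hgap : (∫ x, f x ∂πstar) - ∫ x, f x ∂πε ≤ t * (2 * B) := by
    have h1 := mul_le_mul_of_nonneg_left hub ht0
    have h2 := mul_le_mul_of_nonneg_left hlb ht0
    linarith
  calc (T : ℝ) * (∫ x, f x ∂πstar) - (T : ℝ) * (∫ x, f x ∂πε)
      = T * ((∫ x, f x ∂πstar) - ∫ x, f x ∂πε) := by ring
    _ ≤ T * (t * (2 * B)) := mul_le_mul_of_nonneg_left hgap T.cast_nonneg
    _ = 2 * B * T * ε / δ := by rw [ht]; ring
end

section
/- Let X be a measurable space, V > 0, G ≥ 0, ε ≥ 0, and Q ≥ 0. Let f̄, ḡ : X → ℝ and let x̂ ∈ X satisfy |ḡ(x̂)| ≤ G and f̄(x̂) − (Q/V)·ḡ(x̂) ≥ f̄(x) − (Q/V)·ḡ(x) for all x ∈ X. Set Q' := [Q + ḡ(x̂) + ε]_+. Then for every probability measure π on X with respect to which f̄ and ḡ are integrable, (1/2)·(Q')² − (1/2)·Q² ≤ −V·( E_π[f̄] − f̄(x̂) ) + (1/2)·(G + ε)² + Q·( E_π[ḡ] + ε ). -/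
/-!
Since truncation at zero does not increase squares, the drift is at most
`Q * (gbar xh + ε) + (gbar xh + ε) ^ 2 / 2`, and the quadratic term is at most `(G + ε) ^ 2 / 2`.
Integrating the greedy inequality against `π` and multiplying by `V` bounds `Q * gbar xh` by
`-V * (E_π[fbar] - fbar xh) + Q * E_π[gbar]`, which gives the claim.
-/

open MeasureTheory

/-- Lemma 3 of the paper: drift bound for the virtual queue of the Lyapunov-drift algorithm. -/
theorem lyapunov_drift_bound {X : Type*} [MeasurableSpace X] (V G ε Q : ℝ)
    (hV : 0 < V) (hG : 0 ≤ G) (hε : 0 ≤ ε) (hQ : 0 ≤ Q)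
    (fbar gbar : X → ℝ) (xh : X) (hGb : |gbar xh| ≤ G)
    (hgreedy : ∀ x, fbar x - Q / V * gbar x ≤ fbar xh - Q / V * gbar xh)
    (π : Measure X) [IsProbabilityMeasure π]
    (hfi : Integrable fbar π) (hgi : Integrable gbar π) :
    1 / 2 * (max (Q + gbar xh + ε) 0) ^ 2 - 1 / 2 * Q ^ 2 ≤
      -V * ((∫ x, fbar x ∂π) - fbar xh) + 1 / 2 * (G + ε) ^ 2
        + Q * ((∫ x, gbar x ∂π) + ε) := by
  -- The greedy inequality, averaged over `π`.
  have havg : (∫ x, fbar x ∂π) - Q / V * (∫ x, gbar x ∂π) ≤ fbar xh - Q / V * gbar xh := by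
    have h := integral_mono (hfi.sub (hgi.const_mul (Q / V)))
      (integrable_const (fbar xh - Q / V * gbar xh)) hgreedy
    simpa [integral_sub hfi (hgi.const_mul (Q / V)), integral_const_mul] using h
  have hscaled : V * (∫ x, fbar x ∂π) - Q * (∫ x, gbar x ∂π) ≤ V * fbar xh - Q * gbar xh := by
    have h := mul_le_mul_of_nonneg_left havg hV.le
    have hVQ : V * (Q / V) = Q := mul_div_cancel₀ Q hV.ne'
    simpa only [mul_sub, ← mul_assoc, hVQ] using h
  -- Truncation at zero does not increase the square.
  have hmax : (max (Q + gbar xh + ε) 0) ^ 2 ≤ (Q + gbar xh + ε) ^ 2 := by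
    rcases max_cases (Q + gbar xh + ε) 0 with ⟨h, _⟩ | ⟨h, _⟩ <;> rw [h]
    simpa using sq_nonneg (Q + gbar xh + ε)
  have hsq : (gbar xh + ε) ^ 2 ≤ (G + ε) ^ 2 := by
    obtain ⟨h₁, h₂⟩ := abs_le.mp hGb
    exact sq_le_sq' (by linarith) (by linarith)
  nlinarith [hscaled, hmax, hsq]
end

section
/- Let X be a measurable space, V > 0, G ≥ 0, B ≥ 0, δ > 0, 0 ≤ ε ≤ δ/2, and Q ≥ 0. Let f̄, ḡ : X → ℝ with |f̄(x)| ≤ B for all x ∈ X, and let x̂ ∈ X satisfy |ḡ(x̂)| ≤ G and f̄(x̂) − (Q/V)·ḡ(x̂) ≥ f̄(x) − (Q/V)·ḡ(x) for all x ∈ X. Let π_0 be a probability measure on X with respect to which f̄ and ḡ are integrable and E_{π_0}[ḡ] ≤ −δ. Then, with Q' := [Q + ḡ(x̂) + ε]_+, (1/2)·(Q')² − (1/2)·Q² ≤ 2VB + (1/2)·(G + ε)² − (δ/2)·Q. -/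
/-!
Since `[y]_+ ^ 2 ≤ y ^ 2`, the drift is at most `Q * (gbar xh + ε) + (gbar xh + ε) ^ 2 / 2`, and
`|gbar xh + ε| ≤ G + ε`. Integrating the greedy inequality against `π₀` and using `|fbar| ≤ B`
together with the Slater bound gives `Q * gbar xh ≤ 2 * V * B - δ * Q`; the slack `ε ≤ δ / 2`
then leaves the drift term `-(δ / 2) * Q`.
-/

open MeasureTheory

/-- Negative-drift inequality of the Lyapunov-drift method (Lemma 3 applied with π = π₀). -/
theorem lyapunov_negative_drift {X : Type*} [MeasurableSpace X] (V G B δ ε Q : ℝ)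
    (hV : 0 < V) (hG : 0 ≤ G) (hB : 0 ≤ B) (hδ : 0 < δ) (hε : 0 ≤ ε) (hεδ : ε ≤ δ / 2)
    (hQ : 0 ≤ Q)
    (fbar gbar : X → ℝ) (hfB : ∀ x, |fbar x| ≤ B)
    (xh : X) (hGb : |gbar xh| ≤ G)
    (hgreedy : ∀ x, fbar x - Q / V * gbar x ≤ fbar xh - Q / V * gbar xh)
    (π₀ : Measure X) [IsProbabilityMeasure π₀]
    (hfi : Integrable fbar π₀) (hgi : Integrable gbar π₀)
    (hslater : ∫ x, gbar x ∂π₀ ≤ -δ) :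
    1 / 2 * (max (Q + gbar xh + ε) 0) ^ 2 - 1 / 2 * Q ^ 2 ≤
      2 * V * B + 1 / 2 * (G + ε) ^ 2 - δ / 2 * Q := by
  have hint : ∫ x, (fbar x - Q / V * gbar x) ∂π₀ ≤ fbar xh - Q / V * gbar xh := by
    have h := integral_mono (hfi.sub (hgi.const_mul (Q / V)))
      (integrable_const (fbar xh - Q / V * gbar xh)) hgreedy
    simpa using h
  rw [integral_sub hfi (hgi.const_mul _), integral_const_mul] at hint
  have hf : -B ≤ ∫ x, fbar x ∂π₀ := by
    have h := integral_mono (integrable_const (-B)) hfi (fun x => (abs_le.mp (hfB x)).1)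
    simpa using h
  have hfx : fbar xh ≤ B := (abs_le.mp (hfB xh)).2
  have hQg : Q * gbar xh ≤ 2 * V * B - δ * Q := by
    have hs : Q / V * ∫ x, gbar x ∂π₀ ≤ Q / V * -δ :=
      mul_le_mul_of_nonneg_left hslater (div_nonneg hQ hV.le)
    have h : Q / V * gbar xh ≤ 2 * B - Q / V * δ := by linarith
    calc Q * gbar xh = V * (Q / V * gbar xh) := by field_simp
      _ ≤ V * (2 * B - Q / V * δ) := mul_le_mul_of_nonneg_left h hV.le
      _ = 2 * V * B - δ * Q := by field_simp
  have hmax : (max (Q + gbar xh + ε) 0) ^ 2 ≤ (Q + gbar xh + ε) ^ 2 := by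
    rw [sq_le_sq, abs_of_nonneg (le_max_right _ _)]
    exact max_le (le_abs_self _) (abs_nonneg _)
  have hsq : (gbar xh + ε) ^ 2 ≤ (G + ε) ^ 2 := by
    obtain ⟨h1, h2⟩ := abs_le.mp hGb
    exact sq_le_sq' (by linarith) (by linarith)
  have hQε : Q * ε ≤ Q * (δ / 2) := mul_le_mul_of_nonneg_left hεδ hQ
  linarith [show (Q + gbar xh + ε) ^ 2 =
    Q ^ 2 + 2 * (Q * gbar xh) + 2 * (Q * ε) + (gbar xh + ε) ^ 2 by ring]
end

section
/- Let X be a measurable space, ρ ≥ 0, φ, φ' ∈ [0, ρ], c_f ≥ 0, c_g ≥ 0, and f, g, f̄, ḡ, σ, σ̃ : X → ℝ with |f(x) − f̄(x)| ≤ c_f·σ(x) and |g(x) − ḡ(x)| ≤ c_g·σ̃(x) for all x ∈ X. Let π* and u be probability measures on X with respect to which f, g, f̄, ḡ, σ, σ̃ are all integrable, and let x̂ ∈ X satisfy f̄(x̂) − φ'·ḡ(x̂) ≥ f̄(x) − φ'·ḡ(x) for all x ∈ X. Suppose ( E_{π*}[f] − φ'·E_{π*}[g] ) − ( E_u[f]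 − φ'·E_u[g] ) ≤ c_f·E_u[σ] + φ'·c_g·E_u[σ̃]. Then ( E_{π*}[f] − φ'·E_{π*}[g] ) − ( f̄(x̂) − φ'·ḡ(x̂) ) + ( f̄(x̂) − φ·ḡ(x̂) ) − ( f(x̂) − φ·g(x̂) ) ≤ 2·( c_f·E_u[σ] + φ'·c_g·E_u[σ̃] ) + c_f·σ(x̂) + φ·c_g·σ̃(x̂). -/
/-!
Write `α(u) = cf * E_u[σ] + φ' * cg * E_u[σt]`. Concentration gives the pointwise bound
`f - φ' g ≤ (fbar - φ' gbar) + cf σ + φ' cg σt`, and greediness of `xh` bounds the first bracket by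
its value at `xh`. Integrating against `u` yields `E_u[f - φ' g] ≤ fbar xh - φ' gbar xh + α(u)`.
The undersampling hypothesis costs one more `α(u)` to pass from `u` to `πstar`, and concentration
at `xh` with multiplier `φ` accounts for the remaining terms.
-/

open MeasureTheory

/-- The per-round bound d_t ≤ 2α_{φ'}(u) + α_φ(x̂) (equation (eq:dt)) from the proof of
Theorem 2, conditional on the estimation and concentration events. -/
theorem per_round_dt_bound {X : Type*} [MeasurableSpace X] (ρ φ φ' : ℝ)
    (hρ : 0 ≤ ρ) (hφ : φ ∈ Set.Icc (0 : ℝ) ρ) (hφ' : φ' ∈ Set.Icc (0 : ℝ) ρ)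
    (cf cg : ℝ) (hcf : 0 ≤ cf) (hcg : 0 ≤ cg)
    (f g fbar gbar σ σt : X → ℝ)
    (hfconc : ∀ x, |f x - fbar x| ≤ cf * σ x)
    (hgconc : ∀ x, |g x - gbar x| ≤ cg * σt x)
    (πstar u : Measure X) [IsProbabilityMeasure πstar] [IsProbabilityMeasure u]
    (hfs : Integrable f πstar) (hgs : Integrable g πstar)
    (hfbars : Integrable fbar πstar) (hgbars : Integrable gbar πstar)
    (hσs : Integrable σ πstar) (hσts : Integrable σt πstar)
    (hfu : Integrable f u) (hgu : Integrable g u)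
    (hfbaru : Integrable fbar u) (hgbaru : Integrable gbar u)
    (hσu : Integrable σ u) (hσtu : Integrable σt u)
    (xh : X)
    (hgreedy : ∀ x, fbar x - φ' * gbar x ≤ fbar xh - φ' * gbar xh)
    (hunder : ((∫ x, f x ∂πstar) - φ' * (∫ x, g x ∂πstar))
        - ((∫ x, f x ∂u) - φ' * (∫ x, g x ∂u))
      ≤ cf * (∫ x, σ x ∂u) + φ' * cg * (∫ x, σt x ∂u)) :
    ((∫ x, f x ∂πstar) - φ' * (∫ x, g x ∂πstar)) - (fbar xh - φ' * gbar xh)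
        + (fbar xh - φ * gbar xh) - (f xh - φ * g xh)
      ≤ 2 * (cf * (∫ x, σ x ∂u) + φ' * cg * (∫ x, σt x ∂u))
        + cf * σ xh + φ * cg * σt xh := by
  have hpt : ∀ x, f x - φ' * g x - (cf * σ x + φ' * cg * σt x) ≤ fbar xh - φ' * gbar xh := by
    intro x
    have h1 := (abs_le.mp (hfconc x)).2
    have h2 := mul_le_mul_of_nonneg_left (abs_le.mp (hgconc x)).1 hφ'.1
    linarith [hgreedy x]
  have hL : Integrable (fun x => f x - φ' * g x) u := hfu.sub (hgu.const_mul φ')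
  have hα : Integrable (fun x => cf * σ x + φ' * cg * σt x) u :=
    (hσu.const_mul cf).add (hσtu.const_mul (φ' * cg))
  have hint : ∫ x, (f x - φ' * g x - (cf * σ x + φ' * cg * σt x)) ∂u
      ≤ ∫ _, (fbar xh - φ' * gbar xh) ∂u :=
    integral_mono (hL.sub hα) (integrable_const _) hpt
  rw [integral_sub hL hα,
    integral_sub hfu (hgu.const_mul φ'),
    integral_add (hσu.const_mul cf) (hσtu.const_mul (φ' * cg)),
    integral_const_mul, integral_const_mul, integral_const_mul, integral_const,
    probReal_univ, one_smul] at hint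
  have h1 := (abs_le.mp (hfconc xh)).1
  have h2 := mul_le_mul_of_nonneg_left (abs_le.mp (hgconc xh)).2 hφ.1
  linarith
end

section
/- Let X be a measurable space, T a positive integer, V > 0, G ≥ 0, ε ≥ 0. For each t = 1, …, T let f̄_t, ḡ_t : X → ℝ and x_t ∈ X with |ḡ_t(x_t)| ≤ G. Define Q_1 = 0 and Q_{t+1} = [Q_t + ḡ_t(x_t) + ε]_+, and suppose f̄_t(x_t) − (Q_t/V)·ḡ_t(x_t) ≥ f̄_t(x) − (Q_t/V)·ḡ_t(x) for all x ∈ X and all t. Let π be a probability measure on X with respect to which all f̄_t and ḡ_t are integrable and such that E_π[ḡ_t] + ε ≤ 0 for every t. Then ∑_{t=1}^T ( E_π[f̄_t] − f̄_t(x_t) ) ≤ T·(G + ε)²/(2V). -/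
/-!
The proof is a Lyapunov drift argument with potential `Q t ^ 2 / (2 * V)`. Integrating the greedy
inequality against `π` and using feasibility bounds the round-`t` gap by `-(Q t / V) * (g + ε)`,
where `g = gbar t (x t)`. Since `(max a 0) ^ 2 ≤ a ^ 2`, expanding the square shows that this is at
most the decrease of the potential plus `(G + ε) ^ 2 / (2 * V)`. Summing over `t` telescopes, and the
final potential is nonnegative.
-/

open Finset MeasureTheory

/-- One-round drift inequality: `q` and `q'` are the queue before and after the round, `f` and `g`
the values at the greedy point, `F` and `H` the means of the objective and the constraint. -/
lemma lyapunov_drift_step {V G ε q q' f g F H : ℝ} (hV : 0 < V) (hε : 0 ≤ ε) (hq : 0 ≤ q)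
    (hg : |g| ≤ G) (hq' : q' = max (q + g + ε) 0)
    (hgreedy : F - q / V * H ≤ f - q / V * g) (hfeas : H + ε ≤ 0) :
    F - f ≤ (G + ε) ^ 2 / (2 * V) + q ^ 2 / (2 * V) - q' ^ 2 / (2 * V) := by
  have hmax : q' ^ 2 ≤ (q + g + ε) ^ 2 := by
    rw [hq']
    rcases max_cases (q + g + ε) 0 with ⟨h, _⟩ | ⟨h, _⟩ <;> rw [h]
    nlinarith [sq_nonneg (q + g + ε)]
  have hsq : (g + ε) ^ 2 ≤ (G + ε) ^ 2 := by
    have := abs_le.mp hg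
    apply sq_le_sq' <;> linarith
  have h1 : q / V * H ≤ q / V * (-ε) :=
    mul_le_mul_of_nonneg_left (by linarith) (by positivity)
  have h2 : -(q * (g + ε)) / V ≤ ((G + ε) ^ 2 + q ^ 2 - q' ^ 2) / 2 / V := by
    gcongr
    nlinarith
  calc F - f ≤ -(q * (g + ε)) / V := by
        have : -(q * (g + ε)) / V = q / V * (-ε) - q / V * g := by ring
        linarith
    _ ≤ _ := h2
    _ = _ := by ring

/-- Telescoping bound on Term 3 in the regret decomposition of the Lyapunov-drift method. -/
theorem lyapunov_term3_bound {X : Type*} [MeasurableSpace X] (T : ℕ) (hT : 0 < T)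
    (V G ε : ℝ) (hV : 0 < V) (hG : 0 ≤ G) (hε : 0 ≤ ε)
    (fbar gbar : ℕ → X → ℝ) (x : ℕ → X)
    (hGb : ∀ t ∈ Finset.Icc 1 T, |gbar t (x t)| ≤ G)
    (Q : ℕ → ℝ) (hQ1 : Q 1 = 0)
    (hrec : ∀ t ∈ Finset.Icc 1 T, Q (t + 1) = max (Q t + gbar t (x t) + ε) 0)
    (hgreedy : ∀ t ∈ Finset.Icc 1 T, ∀ y : X,
      fbar t y - Q t / V * gbar t y ≤ fbar t (x t) - Q t / V * gbar t (x t))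
    (π : Measure X) [IsProbabilityMeasure π]
    (hfi : ∀ t ∈ Finset.Icc 1 T, Integrable (fbar t) π)
    (hgi : ∀ t ∈ Finset.Icc 1 T, Integrable (gbar t) π)
    (hfeas : ∀ t ∈ Finset.Icc 1 T, (∫ y, gbar t y ∂π) + ε ≤ 0) :
    ∑ t ∈ Finset.Icc 1 T, ((∫ y, fbar t y ∂π) - fbar t (x t)) ≤
      (T : ℝ) * (G + ε) ^ 2 / (2 * V) := by
  have key : ∀ n ≤ T, 0 ≤ Q (n + 1) ∧
      ∑ t ∈ Finset.Icc 1 n, ((∫ y, fbar t y ∂π) - fbar t (x t)) ≤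
        (n : ℝ) * ((G + ε) ^ 2 / (2 * V)) - Q (n + 1) ^ 2 / (2 * V) := by
    intro n
    induction n with
    | zero => intro _; simp [hQ1]
    | succ n ih =>
      intro hn
      obtain ⟨hq, hs⟩ := ih (by omega)
      have ht : n + 1 ∈ Finset.Icc 1 T := Finset.mem_Icc.mpr ⟨by omega, hn⟩
      refine ⟨by rw [hrec _ ht]; exact le_max_right _ _, ?_⟩
      have hgi' := (hgi _ ht).const_mul (Q (n + 1) / V)
      have hint := integral_mono ((hfi _ ht).sub hgi') (integrable_const _) (hgreedy _ ht)
      simp only [Pi.sub_apply] at hint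
      rw [integral_sub (hfi _ ht) hgi', integral_const_mul] at hint
      simp only [integral_const, probReal_univ, one_smul] at hint
      have hstep := lyapunov_drift_step hV hε hq (hGb _ ht) (hrec _ ht) hint (hfeas _ ht)
      rw [Finset.sum_Icc_succ_top (by omega)]
      push_cast
      linarith
  have hfinal := (key T le_rfl).2
  have hpot : 0 ≤ Q (T + 1) ^ 2 / (2 * V) := by positivity
  rw [mul_div_assoc]
  linarith
end
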